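/- arXiv:2109.03788 — 2 statements merged into one kernel-verified Lean document; each statement's English description precedes it below -/
import Mathlib

section
/- (Uniform Boundary Harnack Inequality at infinity.) In the setting of assumptions (A) and (B), with B₀ a finite set satisfying sup{1/V(x) : x ∉ B₀} < min(1, 1/C_*) and C₂ the upper-bound constant: for every finite B ⊇ B₀ and every D ⊆ X, if f and g are two non-negative, non-zero, bounded functions which are (𝒰−I)-harmonic in D ∩ B^c and vanish on D^c ∩ B^c, then (K̲_B/(C₂ K̄_B))² ≤ f(x)g(y)/(g(x)f(y)) ≤ (C₂ K̄_B/K̲_B)² for all x, y ∈ D ∩ B^c. -/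
/-!
Write `h_f x = ∑ y ∈ B, P x y * f y`. Off `B`, the function `f` is comparable to `h_f / V`: keeping
only the terms in `B` of the harmonicity equation gives `h_f / V ≤ f` on `D`, and `f ≤ C₂ h_f / V`
is the upper bound for subharmonic functions, which applies because `f` vanishes off `D ∪ B`. In
the ratio `f x * g y / (g x * f y)` the potential cancels. Expanding
`h_f x * h_g y = ∑ z w, P x z * P y w * f z * g w`, exchanging `z` and `w` in the two kernel factors
costs one factor `K̄_B` each, which turns the product into `h_g x * h_f y`. Hence the ratio is at
most `(C₂ K̄_B)²`, and exchanging `f` and `g` bounds it from below. As `0 < K̲_B ≤ 1`, this is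
stronger than the bound in terms of `C₂ K̄_B / K̲_B`. The number `K̄_B` is finite because
`P x y * P y z ≤ P₂ x z ≤ C_* P x z` bounds `P x y / P x z` uniformly in `x`.
-/

/-- The Feynman–Kac operator `𝒰`, so that `(𝒰 - I) f = 0` reads `feynmanKac P V f x = f x`. -/
noncomputable def feynmanKac {X : Type*} (P : X → X → ℝ) (V f : X → ℝ) (x : X) : ℝ :=
  1 / V x * ∑' y, P x y * f y

/-- The ratios of the kernel over `B`: their infimum is `K̲_B` and their supremum is `K̄_B`. -/
def kernelRatios {X : Type*} (P : X → X → ℝ) (B : Finset X) : Set ℝ :=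
  {r | ∃ x, ∃ y ∈ B, ∃ z ∈ B, r = P x y / P x z}

/-- The class of functions in the boundary Harnack inequality: non-negative, non-zero, bounded,
`(𝒰 - I)`-harmonic in `D ∩ Bᶜ` and vanishing on `Dᶜ ∩ Bᶜ`. -/
structure IsBoundaryHarmonic {X : Type*} (P : X → X → ℝ) (V : X → ℝ) (B : Finset X) (D : Set X)
    (f : X → ℝ) : Prop where
  nonneg : ∀ x, 0 ≤ f x
  exists_ne_zero : ∃ x, f x ≠ 0
  bounded : ∃ M : ℝ, ∀ x, f x ≤ M
  harmonic : ∀ x, x ∈ D → x ∉ B → feynmanKac P V f x = f x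
  vanishes : ∀ x, x ∉ D → x ∉ B → f x = 0

/-- `C` is a constant (the `C₂` of the paper) in the upper bound, off `B`, for non-negative bounded
functions that are `(𝒰 - I)`-subharmonic in `Bᶜ`. -/
def IsSubharmonicBound {X : Type*} (P : X → X → ℝ) (V : X → ℝ) (B : Finset X) (C : ℝ) : Prop :=
  ∀ f : X → ℝ, (∀ x, 0 ≤ f x) → (∃ M : ℝ, ∀ x, f x ≤ M) →
    (∀ x ∉ B, f x ≤ feynmanKac P V f x) →
    ∀ x ∉ B, f x ≤ C * (1 / V x * ∑ y ∈ B, P x y * f y)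

theorem summable_mul_of_nonneg_of_le {ι : Type*} {a f : ι → ℝ} {M : ℝ} (ha : Summable a)
    (ha0 : ∀ i, 0 ≤ a i) (hf0 : ∀ i, 0 ≤ f i) (hM : ∀ i, f i ≤ M) :
    Summable fun i => a i * f i :=
  .of_nonneg_of_le (fun i => mul_nonneg (ha0 i) (hf0 i))
    (fun i => mul_le_mul_of_nonneg_left (hM i) (ha0 i)) (ha.mul_right M)

theorem sq_div_le_and_le_sq_div {k c r : ℝ} (hk0 : 0 < k) (hk1 : k ≤ 1)
    (hr : (c ^ 2)⁻¹ ≤ r ∧ r ≤ c ^ 2) : (k / c) ^ 2 ≤ r ∧ r ≤ (c / k) ^ 2 := by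
  have hk : k ^ 2 ≤ 1 := pow_le_one₀ hk0.le hk1
  rw [div_pow, div_pow]
  constructor
  · calc k ^ 2 / c ^ 2 = k ^ 2 * (c ^ 2)⁻¹ := div_eq_mul_inv _ _
      _ ≤ (c ^ 2)⁻¹ := mul_le_of_le_one_left (inv_nonneg.2 (sq_nonneg c)) hk
      _ ≤ r := hr.1
  · exact hr.2.trans (le_div_self (sq_nonneg c) (pow_pos hk0 2) hk)

section KernelRatios

variable {X : Type*} {P : X → X → ℝ} {B : Finset X}

theorem mul_le_tsum_mul (hP_nonneg : ∀ x y, 0 ≤ P x y) (hP_sum : ∀ x, Summable (P x))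
    (hP_sub : ∀ x, ∑' y, P x y ≤ 1) (x y z : X) : P x y * P y z ≤ ∑' w, P x w * P w z := by
  have hP_le_one (w : X) : P w z ≤ 1 :=
    ((hP_sum w).le_tsum z fun v _ => hP_nonneg w v).trans (hP_sub w)
  have hsum : Summable fun w => P x w * P w z :=
    summable_mul_of_nonneg_of_le (hP_sum x) (hP_nonneg x) (hP_nonneg · z) hP_le_one
  exact hsum.le_tsum y fun w _ => mul_nonneg (hP_nonneg x w) (hP_nonneg w z)

theorem bddAbove_kernelRatios {C : ℝ} (hP_pos : ∀ x y, 0 < P x y)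
    (hC : ∀ x y z, P x y * P y z ≤ C * P x z) : BddAbove (kernelRatios P B) := by
  obtain ⟨M, hM⟩ := ((B ×ˢ B).image fun p => C / P p.1 p.2).bddAbove
  refine ⟨M, ?_⟩
  rintro _ ⟨x, y, hy, z, hz, rfl⟩
  calc P x y / P x z ≤ C / P y z :=
        (div_le_div_iff₀ (hP_pos x z) (hP_pos y z)).2 (hC x y z)
    _ ≤ M := hM (Finset.mem_image_of_mem (fun p => C / P p.1 p.2) (Finset.mk_mem_product hy hz))

theorem pos_of_mem_kernelRatios (hP_pos : ∀ x y, 0 < P x y) {r : ℝ} (hr : r ∈ kernelRatios P B) :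
    0 < r := by
  obtain ⟨x, y, -, z, -, rfl⟩ := hr
  exact div_pos (hP_pos x y) (hP_pos x z)

theorem inv_mem_kernelRatios {r : ℝ} (hr : r ∈ kernelRatios P B) : r⁻¹ ∈ kernelRatios P B := by
  obtain ⟨x, y, hy, z, hz, rfl⟩ := hr
  exact ⟨x, z, hz, y, hy, inv_div _ _⟩

theorem one_mem_kernelRatios (hP_pos : ∀ x y, 0 < P x y) (hB : B.Nonempty) :
    1 ∈ kernelRatios P B := by
  obtain ⟨z, hz⟩ := hB
  exact ⟨z, z, hz, z, hz, (div_self (hP_pos z z).ne').symm⟩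

theorem sInf_kernelRatios_le_one (hP_pos : ∀ x y, 0 < P x y) (hB : B.Nonempty) :
    sInf (kernelRatios P B) ≤ 1 :=
  csInf_le ⟨0, fun _ hr => (pos_of_mem_kernelRatios hP_pos hr).le⟩ (one_mem_kernelRatios hP_pos hB)

theorem sInf_kernelRatios_pos (hP_pos : ∀ x y, 0 < P x y) (hK : BddAbove (kernelRatios P B))
    (hB : B.Nonempty) : 0 < sInf (kernelRatios P B) := by
  have hone := one_mem_kernelRatios hP_pos hB
  have hsup : 0 < sSup (kernelRatios P B) := one_pos.trans_le (le_csSup hK hone)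
  refine (inv_pos.2 hsup).trans_le (le_csInf ⟨1, hone⟩ fun r hr => ?_)
  exact inv_le_of_inv_le₀ (pos_of_mem_kernelRatios hP_pos hr)
    (le_csSup hK (inv_mem_kernelRatios hr))

theorem kernel_le_sSup_kernelRatios_mul (hP_pos : ∀ x y, 0 < P x y)
    (hK : BddAbove (kernelRatios P B)) (x : X) {y z : X} (hy : y ∈ B) (hz : z ∈ B) :
    P x y ≤ sSup (kernelRatios P B) * P x z :=
  (div_le_iff₀ (hP_pos x z)).1 (le_csSup hK ⟨x, y, hy, z, hz, rfl⟩)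

theorem sum_mul_sum_le_sq_sSup_kernelRatios_mul (hP_pos : ∀ x y, 0 < P x y)
    (hK : BddAbove (kernelRatios P B)) {f g : X → ℝ} (hf : ∀ x, 0 ≤ f x) (hg : ∀ x, 0 ≤ g x)
    (x y : X) :
    (∑ z ∈ B, P x z * f z) * ∑ w ∈ B, P y w * g w ≤
      sSup (kernelRatios P B) ^ 2 * ((∑ w ∈ B, P x w * g w) * ∑ z ∈ B, P y z * f z) := by
  set K := sSup (kernelRatios P B)
  have hswap {z w : X} (hz : z ∈ B) (hw : w ∈ B) :
      P x z * P y w ≤ K * P x w * (K * P y z) :=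
    have hx : P x z ≤ K * P x w := kernel_le_sSup_kernelRatios_mul hP_pos hK x hz hw
    have hy : P y w ≤ K * P y z := kernel_le_sSup_kernelRatios_mul hP_pos hK y hw hz
    mul_le_mul hx hy (hP_pos y w).le ((hP_pos x z).le.trans hx)
  calc (∑ z ∈ B, P x z * f z) * ∑ w ∈ B, P y w * g w
      = ∑ z ∈ B, ∑ w ∈ B, P x z * P y w * (f z * g w) := by
        rw [Finset.sum_mul_sum]
        exact Finset.sum_congr rfl fun z _ => Finset.sum_congr rfl fun w _ => by ring
    _ ≤ ∑ z ∈ B, ∑ w ∈ B, K * P x w * (K * P y z) * (f z * g w) :=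
        Finset.sum_le_sum fun z hz => Finset.sum_le_sum fun w hw =>
          mul_le_mul_of_nonneg_right (hswap hz hw) (mul_nonneg (hf z) (hg w))
    _ = K ^ 2 * ((∑ w ∈ B, P x w * g w) * ∑ z ∈ B, P y z * f z) := by
        rw [Finset.sum_mul_sum, Finset.sum_comm, Finset.mul_sum]
        simp only [Finset.mul_sum]
        exact Finset.sum_congr rfl fun w _ => Finset.sum_congr rfl fun z _ => by ring

end KernelRatios

namespace IsBoundaryHarmonic

variable {X : Type*} {P : X → X → ℝ} {V : X → ℝ} {B : Finset X} {D : Set X} {C : ℝ} {f g : X → ℝ}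

theorem le_feynmanKac (hf : IsBoundaryHarmonic P V B D f) (hP_nonneg : ∀ x y, 0 ≤ P x y)
    (hV : ∀ x, 0 < V x) {x : X} (hxB : x ∉ B) : f x ≤ feynmanKac P V f x := by
  by_cases hxD : x ∈ D
  · exact (hf.harmonic x hxD hxB).ge
  · rw [hf.vanishes x hxD hxB]
    exact mul_nonneg (one_div_pos.2 (hV x)).le
      (tsum_nonneg fun y => mul_nonneg (hP_nonneg x y) (hf.nonneg y))

theorem le_mul_sum (hf : IsBoundaryHarmonic P V B D f) (hP_nonneg : ∀ x y, 0 ≤ P x y)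
    (hV : ∀ x, 0 < V x) (hC : IsSubharmonicBound P V B C) {x : X} (hxB : x ∉ B) :
    f x ≤ C * (1 / V x * ∑ y ∈ B, P x y * f y) :=
  hC f hf.nonneg hf.bounded (fun _ => hf.le_feynmanKac hP_nonneg hV) x hxB

theorem sum_le (hf : IsBoundaryHarmonic P V B D f) (hP_nonneg : ∀ x y, 0 ≤ P x y)
    (hP_sum : ∀ x, Summable (P x)) (hV : ∀ x, 0 < V x) {x : X} (hxD : x ∈ D) (hxB : x ∉ B) :
    1 / V x * ∑ y ∈ B, P x y * f y ≤ f x := by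
  obtain ⟨M, hM⟩ := hf.bounded
  have hsum : Summable fun y => P x y * f y :=
    summable_mul_of_nonneg_of_le (hP_sum x) (hP_nonneg x) hf.nonneg hM
  calc 1 / V x * ∑ y ∈ B, P x y * f y ≤ feynmanKac P V f x :=
        mul_le_mul_of_nonneg_left
          (hsum.sum_le_tsum B fun y _ => mul_nonneg (hP_nonneg x y) (hf.nonneg y))
          (one_div_pos.2 (hV x)).le
    _ = f x := hf.harmonic x hxD hxB

theorem exists_mem_pos (hf : IsBoundaryHarmonic P V B D f) (hP_nonneg : ∀ x y, 0 ≤ P x y)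
    (hV : ∀ x, 0 < V x) (hC : IsSubharmonicBound P V B C) : ∃ z ∈ B, 0 < f z := by
  by_contra! hfB
  obtain ⟨x, hx⟩ := hf.exists_ne_zero
  refine hx (le_antisymm ?_ (hf.nonneg x))
  by_cases hxB : x ∈ B
  · exact hfB x hxB
  · have hsum : ∑ y ∈ B, P x y * f y = 0 :=
      Finset.sum_eq_zero fun y hy => by rw [(hfB y hy).antisymm (hf.nonneg y), mul_zero]
    simpa only [hsum, mul_zero] using hf.le_mul_sum hP_nonneg hV hC hxB

theorem finset_nonempty (hf : IsBoundaryHarmonic P V B D f) (hP_nonneg : ∀ x y, 0 ≤ P x y)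
    (hV : ∀ x, 0 < V x) (hC : IsSubharmonicBound P V B C) : B.Nonempty :=
  (hf.exists_mem_pos hP_nonneg hV hC).imp fun _ => And.left

theorem pos (hf : IsBoundaryHarmonic P V B D f) (hP_pos : ∀ x y, 0 < P x y)
    (hP_sum : ∀ x, Summable (P x)) (hV : ∀ x, 0 < V x) (hC : IsSubharmonicBound P V B C)
    {x : X} (hxD : x ∈ D) (hxB : x ∉ B) : 0 < f x := by
  have hP_nonneg (y z : X) : 0 ≤ P y z := (hP_pos y z).le
  obtain ⟨z, hz, hfz⟩ := hf.exists_mem_pos hP_nonneg hV hC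
  have hsum : 0 < ∑ y ∈ B, P x y * f y :=
    Finset.sum_pos' (fun y _ => mul_nonneg (hP_nonneg x y) (hf.nonneg y))
      ⟨z, hz, mul_pos (hP_pos x z) hfz⟩
  exact (mul_pos (one_div_pos.2 (hV x)) hsum).trans_le (hf.sum_le hP_nonneg hP_sum hV hxD hxB)

theorem mul_le_sq_mul_mul (hf : IsBoundaryHarmonic P V B D f) (hg : IsBoundaryHarmonic P V B D g)
    (hP_pos : ∀ x y, 0 < P x y) (hP_sum : ∀ x, Summable (P x))
    (hK : BddAbove (kernelRatios P B)) (hV : ∀ x, 0 < V x) (hC : IsSubharmonicBound P V B C)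
    {x y : X} (hxD : x ∈ D) (hxB : x ∉ B) (hyD : y ∈ D) (hyB : y ∉ B) :
    f x * g y ≤ (C * sSup (kernelRatios P B)) ^ 2 * (g x * f y) := by
  have hP_nonneg (z w : X) : 0 ≤ P z w := (hP_pos z w).le
  have hVinv (z : X) : 0 ≤ 1 / V z := (one_div_pos.2 (hV z)).le
  have hf_upper := hf.le_mul_sum hP_nonneg hV hC hxB
  have hg_upper := hg.le_mul_sum hP_nonneg hV hC hyB
  have hg_lower := hg.sum_le hP_nonneg hP_sum hV hxD hxB
  have hf_lower := hf.sum_le hP_nonneg hP_sum hV hyD hyB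
  set K := sSup (kernelRatios P B)
  calc f x * g y
      ≤ C * (1 / V x * ∑ z ∈ B, P x z * f z) * (C * (1 / V y * ∑ w ∈ B, P y w * g w)) :=
        mul_le_mul hf_upper hg_upper (hg.nonneg y) ((hf.nonneg x).trans hf_upper)
    _ = C ^ 2 * (1 / V x * (1 / V y)) *
          ((∑ z ∈ B, P x z * f z) * ∑ w ∈ B, P y w * g w) := by ring
    _ ≤ C ^ 2 * (1 / V x * (1 / V y)) *
          (K ^ 2 * ((∑ w ∈ B, P x w * g w) * ∑ z ∈ B, P y z * f z)) :=
        mul_le_mul_of_nonneg_left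
          (sum_mul_sum_le_sq_sSup_kernelRatios_mul hP_pos hK hf.nonneg hg.nonneg x y)
          (mul_nonneg (sq_nonneg C) (mul_nonneg (hVinv x) (hVinv y)))
    _ = (C * K) ^ 2 *
          ((1 / V x * ∑ w ∈ B, P x w * g w) * (1 / V y * ∑ z ∈ B, P y z * f z)) := by ring
    _ ≤ (C * K) ^ 2 * (g x * f y) :=
        mul_le_mul_of_nonneg_left
          (mul_le_mul hg_lower hf_lower
            (mul_nonneg (hVinv y)
              (Finset.sum_nonneg fun z _ => mul_nonneg (hP_nonneg y z) (hf.nonneg z)))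
            (hg.nonneg x))
          (sq_nonneg _)

end IsBoundaryHarmonic

theorem stmt4_general {X : Type*} {P : X → X → ℝ} {V : X → ℝ} {B : Finset X} {D : Set X} {C : ℝ}
    {f g : X → ℝ} (hP_pos : ∀ x y, 0 < P x y) (hP_sum : ∀ x, Summable (P x))
    (hK : BddAbove (kernelRatios P B)) (hV : ∀ x, 0 < V x) (hC : IsSubharmonicBound P V B C)
    (hf : IsBoundaryHarmonic P V B D f) (hg : IsBoundaryHarmonic P V B D g)
    {x y : X} (hxD : x ∈ D) (hxB : x ∉ B) (hyD : y ∈ D) (hyB : y ∉ B) :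
    ((C * sSup (kernelRatios P B)) ^ 2)⁻¹ ≤ f x * g y / (g x * f y) ∧
      f x * g y / (g x * f y) ≤ (C * sSup (kernelRatios P B)) ^ 2 := by
  have hfg : 0 < f x * g y :=
    mul_pos (hf.pos hP_pos hP_sum hV hC hxD hxB) (hg.pos hP_pos hP_sum hV hC hyD hyB)
  have hgf : 0 < g x * f y :=
    mul_pos (hg.pos hP_pos hP_sum hV hC hxD hxB) (hf.pos hP_pos hP_sum hV hC hyD hyB)
  constructor
  · rw [← inv_div]
    exact inv_anti₀ (div_pos hgf hfg) <| (div_le_iff₀ hfg).2 <|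
      hg.mul_le_sq_mul_mul hf hP_pos hP_sum hK hV hC hxD hxB hyD hyB
  · exact (div_le_iff₀ hgf).2 <|
      hf.mul_le_sq_mul_mul hg hP_pos hP_sum hK hV hC hxD hxB hyD hyB

/-- (Uniform Boundary Harnack Inequality at infinity, Corollary 2.5 of the
paper.) Under assumptions (A) and (B), with `B₀` a finite set satisfying
`sup {1/V x : x ∉ B₀} < min 1 (1/Cstar)` and `C₂` the upper-bound constant: for every finite
`B ⊇ B₀` and every `D ⊆ X`, if `f` and `g` are two non-negative, non-zero, bounded functions
which are `(𝒰 - I)`-harmonic in `D ∩ Bᶜ` and vanish on `Dᶜ ∩ Bᶜ`, then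
`(K̲_B / (C₂ K̄_B))² ≤ f x * g y / (g x * f y) ≤ (C₂ K̄_B / K̲_B)²` for all `x, y ∈ D ∩ Bᶜ`. -/
theorem stmt4 {X : Type*} [Countable X] [Infinite X]
    (P : X → X → ℝ)
    (hP_nonneg : ∀ x y, 0 ≤ P x y)
    (hP_sum : ∀ x : X, Summable (P x))
    (hP_sub : ∀ x : X, ∑' y, P x y ≤ 1)
    (hP_pos : ∀ x y, 0 < P x y)
    (Cstar : ℝ) (hCstar : 0 < Cstar)
    (hDSP : ∀ x y, ∑' z, P x z * P z y ≤ Cstar * P x y)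
    (V : X → ℝ) (hV_pos : ∃ v > 0, ∀ x, v ≤ V x)
    (hV_conf : ∀ M > 0, ∃ BM : Finset X, ∀ x ∉ BM, M ≤ V x)
    (B₀ : Finset X) (C₁ : ℝ)
    (hC₁lt : C₁ < min 1 (1 / Cstar))
    (hB₀ : ∀ x ∉ B₀, 1 / V x ≤ C₁)
    -- `C₂` is the constant from the upper bound for subharmonic functions:
    (C₂ : ℝ) (hC₂pos : 0 < C₂)
    (hC₂ : ∀ B : Finset X, B₀ ⊆ B →
      ∀ f : X → ℝ, (∀ x, 0 ≤ f x) → (∃ M : ℝ, ∀ x, f x ≤ M) →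
        (∀ x ∉ B, f x ≤ (1 / V x) * ∑' y, P x y * f y) →
        ∀ x ∉ B, f x ≤ C₂ * ((1 / V x) * ∑ y ∈ B, P x y * f y)) :
    ∀ B : Finset X, B₀ ⊆ B → ∀ D : Set X,
      ∀ f g : X → ℝ,
        (∀ x, 0 ≤ f x) → (∃ x, f x ≠ 0) → (∃ M : ℝ, ∀ x, f x ≤ M) →
        (∀ x, x ∈ D → x ∉ B → (1 / V x) * ∑' y, P x y * f y = f x) →
        (∀ x, x ∉ D → x ∉ B → f x = 0) →
        (∀ x, 0 ≤ g x) → (∃ x, g x ≠ 0) → (∃ M : ℝ, ∀ x, g x ≤ M) →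
        (∀ x, x ∈ D → x ∉ B → (1 / V x) * ∑' y, P x y * g y = g x) →
        (∀ x, x ∉ D → x ∉ B → g x = 0) →
        ∀ x, x ∈ D → x ∉ B → ∀ y, y ∈ D → y ∉ B →
          (sInf {r : ℝ | ∃ x' : X, ∃ y' ∈ B, ∃ z ∈ B, r = P x' y' / P x' z} /
              (C₂ * sSup {r : ℝ | ∃ x' : X, ∃ y' ∈ B, ∃ z ∈ B, r = P x' y' / P x' z})) ^ 2 ≤
            f x * g y / (g x * f y) ∧
          f x * g y / (g x * f y) ≤
            (C₂ * sSup {r : ℝ | ∃ x' : X, ∃ y' ∈ B, ∃ z ∈ B, r = P x' y' / P x' z} /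
              sInf {r : ℝ | ∃ x' : X, ∃ y' ∈ B, ∃ z ∈ B, r = P x' y' / P x' z}) ^ 2 := by
  intro B hB D f g hf0 hfne hfb hfh hfv hg0 hgne hgb hgh hgv x hxD hxB y hyD hyB
  have hf : IsBoundaryHarmonic P V B D f := ⟨hf0, hfne, hfb, hfh, hfv⟩
  have hg : IsBoundaryHarmonic P V B D g := ⟨hg0, hgne, hgb, hgh, hgv⟩
  obtain ⟨v, hv, hvV⟩ := hV_pos
  have hV (z : X) : 0 < V z := hv.trans_le (hvV z)
  have hB_ne : B.Nonempty := hf.finset_nonempty hP_nonneg hV (hC₂ B hB)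
  have hK : BddAbove (kernelRatios P B) := bddAbove_kernelRatios hP_pos fun z w u =>
    (mul_le_tsum_mul hP_nonneg hP_sum hP_sub z w u).trans (hDSP z u)
  exact sq_div_le_and_le_sq_div (sInf_kernelRatios_pos hP_pos hK hB_ne)
    (sInf_kernelRatios_le_one hP_pos hB_ne)
    (stmt4_general hP_pos hP_sum hK hV (hC₂ B hB) hf hg hxD hxB hyD hyB)
end

section
/- Let X be countably infinite, Q a probability kernel on X which is irreducible (for all x,y ∈ X there exists n ∈ ℕ with Q_n(x,y) > 0), and a : ℕ → [0,1] a probability mass function with a(0) = 0 such that (a∗a)(n) ≤ C a(n) for all n ≥ 2 and there exists n₀ ∈ ℕ with a(n) > 0 for all n ≥ n₀. Then the subordinate kernel P(x,y) = ∑_{k≥1} Q_k(x,y) a(k) satisfies assumption (A): P(x,y) > 0 for all x,y ∈ X and ∑_{z∈X} P(x,z)P(z,y) ≤ C P(x,y) for all x,y ∈ X. -/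
/-- The `n`-step kernels of a Markov kernel `Q` on a countable space: `Q₁ = Q` and
`Q_n(x,y) = ∑_z Q(x,z) Q_{n-1}(z,y)`; by convention `Q₀` is the identity kernel. -/
noncomputable def kernelPow {X : Type*} [DecidableEq X] (Q : X → X → ℝ) : ℕ → X → X → ℝ
  | 0 => fun x y => if x = y then 1 else 0
  | 1 => Q
  | (n + 2) => fun x y => ∑' z, Q x z * kernelPow Q (n + 1) z y

/-! Subordination turns convolution of the step laws into composition of the kernels: by the
Chapman–Kolmogorov equation, `P_a P_b = P_(a ∗ b)` whenever `P_a = ∑ₖ a(k) Q_k`. As `a ↦ P_a` is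
linear and monotone, `a ∗ a ≤ C a` gives `P_a P_a ≤ C P_a`. Irreducibility makes `Q_n(x, y)`
positive for arbitrarily large `n`, where `a` is positive too, so `P_a(x, y) > 0`. Sums are
rearranged in `ℝ≥0∞`, where Tonelli's theorem is unconditional. -/

open Filter Finset
open scoped ENNReal

theorem tsum_tsum_eq_tsum_sum_antidiagonal {A : Type*} [AddMonoid A] [HasAntidiagonal A]
    (f : A → A → ℝ≥0∞) : ∑' i, ∑' j, f i j = ∑' n, ∑ p ∈ antidiagonal n, f p.1 p.2 := by
  rw [← ENNReal.tsum_prod, ← HasAntidiagonal.sigmaAntidiagonalEquivProd.tsum_eq,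
    ENNReal.tsum_sigma']
  exact tsum_congr fun n ↦ Finset.tsum_subtype (antidiagonal n) fun p ↦ f p.1 p.2

theorem sum_antidiagonal_mul_eq_sum_Ico {R : Type*} [NonUnitalNonAssocSemiring R] {f g : ℕ → R}
    (hf : f 0 = 0) (hg : g 0 = 0) (n : ℕ) :
    ∑ p ∈ antidiagonal n, f p.1 * g p.2 = ∑ k ∈ Ico 1 n, f k * g (n - k) := by
  rw [Nat.sum_antidiagonal_eq_sum_range_succ fun i j ↦ f i * g j]
  refine (sum_subset (fun k hk ↦ ?_) fun k hk hk' ↦ ?_).symm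
  · simp only [mem_Ico, mem_range] at hk ⊢
    lia
  · simp only [mem_Ico, mem_range] at hk hk'
    obtain rfl | rfl : k = 0 ∨ k = n := by lia
    · rw [hf, zero_mul]
    · rw [Nat.sub_self, hg, mul_zero]

section KernelComp

variable {W X Y Z : Type*}

/-- The composition `(pq)(x, z) = ∑_y p(x, y) q(y, z)` of two nonnegative kernels, in which
Chapman–Kolmogorov and the direct step property are expressed. -/
noncomputable def kernelComp (p : X → Y → ℝ≥0∞) (q : Y → Z → ℝ≥0∞) (x : X) (z : Z) : ℝ≥0∞ :=
  ∑' y, p x y * q y z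

theorem kernelComp_assoc (p : W → X → ℝ≥0∞) (q : X → Y → ℝ≥0∞) (r : Y → Z → ℝ≥0∞) :
    kernelComp (kernelComp p q) r = kernelComp p (kernelComp q r) := by
  ext w z
  simp only [kernelComp, ← ENNReal.tsum_mul_left, ← ENNReal.tsum_mul_right]
  rw [ENNReal.tsum_comm]
  simp only [mul_assoc]

theorem kernelComp_pos {p : X → Y → ℝ≥0∞} {q : Y → Z → ℝ≥0∞} {x : X} {y : Y} {z : Z}
    (hp : 0 < p x y) (hq : 0 < q y z) : 0 < kernelComp p q x z :=
  (ENNReal.mul_pos hp.ne' hq.ne').trans_le (ENNReal.le_tsum y)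

theorem toReal_kernelComp {p : X → Y → ℝ≥0∞} {q : Y → Z → ℝ≥0∞} (hp : ∀ x y, p x y ≠ ∞)
    (hq : ∀ y z, q y z ≠ ∞) (x : X) (z : Z) :
    (kernelComp p q x z).toReal = ∑' y, (p x y).toReal * (q y z).toReal := by
  simp only [kernelComp, ENNReal.tsum_toReal_eq fun y ↦ ENNReal.mul_ne_top (hp x y) (hq y z),
    ENNReal.toReal_mul]

end KernelComp

section StepKernel

variable {X : Type*} [DecidableEq X] {q : X → X → ℝ≥0∞}

/-- The `n`-step kernel of a nonnegative kernel, starting from the identity kernel at `n = 0`: the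
counterpart of `kernelPow` with values in `ℝ≥0∞`. -/
noncomputable def stepKernel (q : X → X → ℝ≥0∞) : ℕ → X → X → ℝ≥0∞
  | 0 => fun x y ↦ if x = y then 1 else 0
  | n + 1 => kernelComp q (stepKernel q n)

theorem stepKernel_add (q : X → X → ℝ≥0∞) (m n : ℕ) :
    stepKernel q (m + n) = kernelComp (stepKernel q m) (stepKernel q n) := by
  induction m with
  | zero =>
    ext x y
    simp only [zero_add, kernelComp, stepKernel, ite_mul, one_mul, zero_mul, tsum_ite_eq']
  | succ m ih =>
    rw [Nat.succ_add_eq_add_succ, Nat.add_succ, stepKernel, ih, stepKernel, kernelComp_assoc]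

theorem stepKernel_le_one (hq : ∀ x, ∑' y, q x y ≤ 1) (n : ℕ) (x y : X) :
    stepKernel q n x y ≤ 1 := by
  induction n generalizing x with
  | zero =>
    simp only [stepKernel]
    split_ifs <;> simp
  | succ n ih => exact (ENNReal.tsum_le_tsum fun z ↦ mul_le_of_le_one_right' (ih z)).trans (hq x)

theorem stepKernel_ne_top (hq : ∀ x, ∑' y, q x y ≤ 1) (n : ℕ) (x y : X) :
    stepKernel q n x y ≠ ∞ :=
  ne_top_of_le_ne_top ENNReal.one_ne_top (stepKernel_le_one hq n x y)

theorem frequently_stepKernel_pos (hq_irr : ∀ x y, ∃ n, 0 < n ∧ 0 < stepKernel q n x y) (x y : X) :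
    ∃ᶠ n in atTop, 0 < stepKernel q n x y := by
  refine frequently_atTop.2 fun N ↦ ?_
  induction N with
  | zero =>
    obtain ⟨n, -, hn⟩ := hq_irr x y
    exact ⟨n, n.zero_le, hn⟩
  | succ N ih =>
    obtain ⟨n, hNn, hn⟩ := ih
    obtain ⟨m, hm_pos, hm⟩ := hq_irr x x
    refine ⟨m + n, by lia, ?_⟩
    rw [stepKernel_add]
    exact kernelComp_pos hm hn

theorem kernelPow_succ (Q : X → X → ℝ) (n : ℕ) (x y : X) :
    kernelPow Q (n + 1) x y = ∑' z, Q x z * kernelPow Q n z y := by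
  cases n with
  | zero => simp only [kernelPow, mul_ite, mul_one, mul_zero, tsum_ite_eq]
  | succ n => rfl

theorem toReal_stepKernel (hq : ∀ x, ∑' y, q x y ≤ 1) (n : ℕ) (x y : X) :
    (stepKernel q n x y).toReal = kernelPow (fun x y ↦ (q x y).toReal) n x y := by
  have hq_top (x y : X) : q x y ≠ ∞ := ENNReal.ne_top_of_tsum_ne_top
    (ne_top_of_le_ne_top ENNReal.one_ne_top (hq x)) y
  induction n generalizing x with
  | zero =>
    simp only [stepKernel, kernelPow]
    split_ifs <;> simp
  | succ n ih =>
    rw [stepKernel, toReal_kernelComp hq_top (stepKernel_ne_top hq n), kernelPow_succ]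
    simp only [ih]

end StepKernel

section SubordinateKernel

variable {X : Type*} [DecidableEq X] {q : X → X → ℝ≥0∞} {a : ℕ → ℝ≥0∞}

/-- The kernel `∑ₖ Q_k a(k)` subordinate to `q` with step law `a`. The sum starts at `k = 0`, with
the identity kernel as `Q₀`, so that subordination is compatible with convolution for every `a`. -/
noncomputable def subordinateKernel (q : X → X → ℝ≥0∞) (a : ℕ → ℝ≥0∞) (x y : X) : ℝ≥0∞ :=
  ∑' k, stepKernel q k x y * a k

theorem kernelComp_subordinateKernel (q : X → X → ℝ≥0∞) (a b : ℕ → ℝ≥0∞) :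
    kernelComp (subordinateKernel q a) (subordinateKernel q b) =
      subordinateKernel q fun n ↦ ∑ p ∈ antidiagonal n, a p.1 * b p.2 := by
  ext x y
  calc ∑' z, (∑' i, stepKernel q i x z * a i) * ∑' j, stepKernel q j z y * b j
    _ = ∑' z, ∑' i, ∑' j, (stepKernel q i x z * a i) * (stepKernel q j z y * b j) := by
      simp_rw [← ENNReal.tsum_mul_right, ← ENNReal.tsum_mul_left]
    _ = ∑' i, ∑' j, ∑' z, (stepKernel q i x z * a i) * (stepKernel q j z y * b j) := by
      rw [ENNReal.tsum_comm]
      exact tsum_congr fun i ↦ ENNReal.tsum_comm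
    _ = ∑' i, ∑' j, stepKernel q (i + j) x y * (a i * b j) := by
      refine tsum_congr fun i ↦ tsum_congr fun j ↦ ?_
      rw [stepKernel_add, kernelComp, ← ENNReal.tsum_mul_right]
      exact tsum_congr fun z ↦ mul_mul_mul_comm _ _ _ _
    _ = ∑' n, ∑ p ∈ antidiagonal n, stepKernel q (p.1 + p.2) x y * (a p.1 * b p.2) :=
      tsum_tsum_eq_tsum_sum_antidiagonal _
    _ = ∑' n, stepKernel q n x y * ∑ p ∈ antidiagonal n, a p.1 * b p.2 := by
      refine tsum_congr fun n ↦ ?_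
      rw [mul_sum]
      exact sum_congr rfl fun p hp ↦ by rw [mem_antidiagonal.1 hp]

theorem kernelComp_subordinateKernel_le {c : ℝ≥0∞}
    (ha : ∀ n, ∑ p ∈ antidiagonal n, a p.1 * a p.2 ≤ c * a n) (x y : X) :
    kernelComp (subordinateKernel q a) (subordinateKernel q a) x y ≤
      c * subordinateKernel q a x y := by
  rw [kernelComp_subordinateKernel, subordinateKernel, subordinateKernel, ← ENNReal.tsum_mul_left]
  refine ENNReal.tsum_le_tsum fun n ↦ ?_
  rw [mul_left_comm]
  gcongr
  exact ha n

theorem subordinateKernel_pos (hq_irr : ∀ x y, ∃ n, 0 < n ∧ 0 < stepKernel q n x y)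
    (ha : ∀ᶠ n in atTop, 0 < a n) (x y : X) : 0 < subordinateKernel q a x y := by
  obtain ⟨n, hqn, han⟩ := ((frequently_stepKernel_pos hq_irr x y).and_eventually ha).exists
  exact (ENNReal.mul_pos hqn.ne' han.ne').trans_le (ENNReal.le_tsum n)

theorem subordinateKernel_ne_top (hq : ∀ x, ∑' y, q x y ≤ 1) (ha : ∑' n, a n ≠ ∞) (x y : X) :
    subordinateKernel q a x y ≠ ∞ :=
  ne_top_of_le_ne_top ha <|
    ENNReal.tsum_le_tsum fun k ↦ mul_le_of_le_one_left' (stepKernel_le_one hq k x y)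

theorem toReal_subordinateKernel (hq : ∀ x, ∑' y, q x y ≤ 1) (ha : ∀ n, a n ≠ ∞) (x y : X) :
    (subordinateKernel q a x y).toReal =
      ∑' k, kernelPow (fun x y ↦ (q x y).toReal) k x y * (a k).toReal := by
  simp only [subordinateKernel, ENNReal.toReal_mul, toReal_stepKernel hq,
    ENNReal.tsum_toReal_eq fun k ↦ ENNReal.mul_ne_top (stepKernel_ne_top hq k x y) (ha k)]

theorem tsum_toReal_subordinateKernel_mul_le (hq : ∀ x, ∑' y, q x y ≤ 1) (ha : ∑' n, a n ≠ ∞)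
    {C : ℝ} (hC : 0 ≤ C)
    (h_conv : ∀ n, ∑ p ∈ antidiagonal n, a p.1 * a p.2 ≤ ENNReal.ofReal C * a n) (x y : X) :
    ∑' z, (subordinateKernel q a x z).toReal * (subordinateKernel q a z y).toReal ≤
      C * (subordinateKernel q a x y).toReal := by
  have h_top := subordinateKernel_ne_top hq ha
  rw [← toReal_kernelComp h_top h_top]
  calc (kernelComp (subordinateKernel q a) (subordinateKernel q a) x y).toReal
    _ ≤ (ENNReal.ofReal C * subordinateKernel q a x y).toReal :=
      ENNReal.toReal_mono (ENNReal.mul_ne_top ENNReal.ofReal_ne_top (h_top x y))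
        (kernelComp_subordinateKernel_le h_conv x y)
    _ = C * (subordinateKernel q a x y).toReal := by
      rw [ENNReal.toReal_mul, ENNReal.toReal_ofReal hC]

end SubordinateKernel

section DirectStep

variable {a : ℕ → ℝ} {C : ℝ}

theorem nonneg_of_sum_Ico_mul_le (ha_nonneg : ∀ n, 0 ≤ a n)
    (ha_conv : ∀ n, 2 ≤ n → ∑ k ∈ Ico 1 n, a k * a (n - k) ≤ C * a n)
    (ha_pos : ∃ n, 2 ≤ n ∧ 0 < a n) : 0 ≤ C := by
  obtain ⟨n, hn, han⟩ := ha_pos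
  have h_sum : 0 ≤ ∑ k ∈ Ico 1 n, a k * a (n - k) :=
    sum_nonneg fun k _ ↦ mul_nonneg (ha_nonneg k) (ha_nonneg (n - k))
  exact nonneg_of_mul_nonneg_left (h_sum.trans (ha_conv n hn)) han

theorem sum_antidiagonal_ofReal_mul_le (ha_nonneg : ∀ n, 0 ≤ a n) (ha_zero : a 0 = 0) (hC : 0 ≤ C)
    (ha_conv : ∀ n, 2 ≤ n → ∑ k ∈ Ico 1 n, a k * a (n - k) ≤ C * a n) (n : ℕ) :
    ∑ p ∈ antidiagonal n, ENNReal.ofReal (a p.1) * ENNReal.ofReal (a p.2) ≤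
      ENNReal.ofReal C * ENNReal.ofReal (a n) := by
  have h_real : ∑ p ∈ antidiagonal n, a p.1 * a p.2 ≤ C * a n := by
    rw [sum_antidiagonal_mul_eq_sum_Ico ha_zero ha_zero]
    obtain hn | hn := le_or_gt 2 n
    · exact ha_conv n hn
    · rw [Ico_eq_empty_of_le (by lia), sum_empty]
      exact mul_nonneg hC (ha_nonneg n)
  simp only [← ENNReal.ofReal_mul hC, ← ENNReal.ofReal_mul (ha_nonneg _)]
  rw [← ENNReal.ofReal_sum_of_nonneg fun p _ ↦ mul_nonneg (ha_nonneg p.1) (ha_nonneg p.2)]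
  exact ENNReal.ofReal_le_ofReal h_real

end DirectStep

theorem stmt15_general {X : Type*} [DecidableEq X]
    (Q : X → X → ℝ)
    (hQ_nonneg : ∀ x y, 0 ≤ Q x y)
    (hQ_sum : ∀ x : X, Summable (Q x))
    (hQ_le_one : ∀ x : X, ∑' y, Q x y ≤ 1)
    (hQ_irr : ∀ x y : X, ∃ n : ℕ, 0 < n ∧ 0 < kernelPow Q n x y)
    (a : ℕ → ℝ)
    (ha_nonneg : ∀ n, 0 ≤ a n)
    (ha_zero : a 0 = 0)
    (ha_sum : Summable a)
    (C : ℝ)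
    (hDSP_a : ∀ n : ℕ, 2 ≤ n → ∑ k ∈ Finset.Ico 1 n, a k * a (n - k) ≤ C * a n)
    (ha_pos : ∃ n₀ : ℕ, ∀ n, n₀ ≤ n → 0 < a n)
    (P : X → X → ℝ)
    (hP : ∀ x y, P x y = ∑' k : ℕ, kernelPow Q k x y * a k) :
    (∀ x y, 0 < P x y) ∧
    (∀ x y, ∑' z, P x z * P z y ≤ C * P x y) := by
  obtain ⟨q, rfl, hq⟩ : ∃ q : X → X → ℝ≥0∞,
      Q = (fun x y ↦ (q x y).toReal) ∧ ∀ x, ∑' y, q x y ≤ 1 := by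
    refine ⟨fun x y ↦ .ofReal (Q x y), ?_, fun x ↦ ?_⟩
    · simp only [ENNReal.toReal_ofReal (hQ_nonneg _ _)]
    · rw [← ENNReal.ofReal_tsum_of_nonneg (hQ_nonneg x) (hQ_sum x)]
      exact ENNReal.ofReal_le_one.2 (hQ_le_one x)
  have hP_toReal (x y : X) : P x y = (subordinateKernel q (fun n ↦ .ofReal (a n)) x y).toReal := by
    simp only [hP, toReal_subordinateKernel hq fun _ ↦ ENNReal.ofReal_ne_top,
      ENNReal.toReal_ofReal (ha_nonneg _)]
  have ha_top : ∑' n, ENNReal.ofReal (a n) ≠ ∞ := ha_sum.tsum_ofReal_ne_top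
  have hq_irr (x y : X) : ∃ n, 0 < n ∧ 0 < stepKernel q n x y := by
    obtain ⟨n, hn_pos, hn⟩ := hQ_irr x y
    exact ⟨n, hn_pos, (ENNReal.toReal_pos_iff.1 (toReal_stepKernel hq n x y ▸ hn)).1⟩
  have ha_ev : ∀ᶠ n in atTop, 0 < a n := eventually_atTop.2 ha_pos
  have hC : 0 ≤ C := nonneg_of_sum_Ico_mul_le ha_nonneg hDSP_a
    ((eventually_ge_atTop 2).and ha_ev).exists
  simp only [hP_toReal]
  refine ⟨fun x y ↦ ENNReal.toReal_pos ?_ (subordinateKernel_ne_top hq ha_top x y), ?_⟩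
  · exact (subordinateKernel_pos hq_irr (ha_ev.mono fun _ ↦ ENNReal.ofReal_pos.2) x y).ne'
  · exact tsum_toReal_subordinateKernel_mul_le hq ha_top hC
      (sum_antidiagonal_ofReal_mul_le ha_nonneg ha_zero hC hDSP_a)

/-- (Corollary 5.4 of the paper.) Let `X` be countably infinite, `Q` an
irreducible probability kernel on `X`, and `a : ℕ → [0,1]` a probability mass function with
`a 0 = 0`, `(a∗a)(n) ≤ C * a n` for all `n ≥ 2`, and `a n > 0` for all `n ≥ n₀` for some
`n₀ ∈ ℕ`. Then the subordinate kernel `P x y = ∑_{k ≥ 1} Q_k x y * a k` satisfies assumption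
(A): `P x y > 0` for all `x, y` and `∑_z P x z * P z y ≤ C * P x y` for all `x, y`. -/
theorem stmt15 {X : Type*} [Countable X] [Infinite X] [DecidableEq X]
    (Q : X → X → ℝ)
    (hQ_nonneg : ∀ x y, 0 ≤ Q x y)
    (hQ_sum : ∀ x : X, Summable (Q x))
    (hQ_prob : ∀ x : X, ∑' y, Q x y = 1)
    (hQ_irr : ∀ x y : X, ∃ n : ℕ, 0 < n ∧ 0 < kernelPow Q n x y)
    (a : ℕ → ℝ)
    (ha_nonneg : ∀ n, 0 ≤ a n) (ha_le_one : ∀ n, a n ≤ 1)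
    (ha_zero : a 0 = 0)
    (ha_sum : Summable a) (ha_total : ∑' n, a n = 1)
    (C : ℝ)
    (hDSP_a : ∀ n : ℕ, 2 ≤ n → ∑ k ∈ Finset.Ico 1 n, a k * a (n - k) ≤ C * a n)
    (ha_pos : ∃ n₀ : ℕ, ∀ n, n₀ ≤ n → 0 < a n)
    (P : X → X → ℝ)
    (hP : ∀ x y, P x y = ∑' k : ℕ, kernelPow Q k x y * a k) :
    (∀ x y, 0 < P x y) ∧
    (∀ x y, ∑' z, P x z * P z y ≤ C * P x y) :=
  stmt15_general Q hQ_nonneg hQ_sum (fun x ↦ (hQ_prob x).le) hQ_irr a ha_nonneg ha_zero ha_sum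
    C hDSP_a ha_pos P hP
end
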